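/- Let p be a binary word with exactly 3 runs and of length l ≥ 4. If p is not trivially equivalent to 1101, then B_{n,p}(M_{n,p} − 1) = 0 for all n ≥ l + 2; in particular p has an internal zero at every n ≥ l + 2. If p is trivially equivalent to 1101, then p does not have an internal zero at n = 6 = l + 2, but B_{n,p}(M_{n,p} − 1) = 0 for all n ≥ 7. -/

import Mathlib

/-- `occ p w` is the number of occurrences of `p` as a subsequence of `w`,
i.e. the number of choices of indices `i₁ < ⋯ < i_l` in `w` matching `p`. -/
def occ (p w : List Bool) : ℕ := w.sublists.count p

/-- `B n p k` is the number of binary words of length `n` with exactly `k` occurrences of `p`. -/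
noncomputable def B (n : ℕ) (p : List Bool) (k : ℕ) : ℕ :=
  Nat.card {w : List Bool // w.length = n ∧ occ p w = k}

/-- The list of runs (maximal blocks of consecutive equal letters) of a binary word. -/
def runs (p : List Bool) : List (List Bool) := p.splitBy (· == ·)

/-- The number of runs of a binary word. -/
def numRuns (p : List Bool) : ℕ := (runs p).length

/-- The number of runs of size `i` of a binary word. -/
def numRunsOfSize (p : List Bool) (i : ℕ) : ℕ := ((runs p).map List.length).count i

/-- `maxOcc n p` is the maximum number of occurrences of `p` among binary words of length `n`. -/
noncomputable def maxOcc (n : ℕ) (p : List Bool) : ℕ :=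
  sSup {k | ∃ w : List Bool, w.length = n ∧ occ p w = k}

/-- `p` has an internal zero at `n` if the sequence `(B n p k)_{k ≥ 0}` has an internal zero. -/
def HasInternalZeroAt (p : List Bool) (n : ℕ) : Prop :=
  ∃ k₁ k₂ k₃ : ℕ, k₁ < k₂ ∧ k₂ < k₃ ∧ B n p k₁ ≠ 0 ∧ B n p k₂ = 0 ∧ B n p k₃ ≠ 0

/-- `p` and `q` are trivially equivalent: `q` is `p`, its reverse, its complement,
or its reversed complement. -/
def TrivEquiv (p q : List Bool) : Prop :=
  q = p ∨ q = p.reverse ∨ q = p.map (!·) ∨ q = (p.map (!·)).reverse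


/-! ### Arithmetic of binomial products -/

lemma choose_ge_aux (a r : ℕ) (h : r + 1 ≤ a) : r + 1 ≤ a.choose r := by
  calc r + 1 = (r + 1).choose r := by simp
    _ ≤ a.choose r := Nat.choose_le_choose r h

lemma choose_eq_aux (a r : ℕ) (h : r + 1 ≤ a) (he : a.choose r = r + 1) :
    a = r + 1 ∨ r = 0 := by
  by_contra hcon
  push Not at hcon
  obtain ⟨h1, h2⟩ := hcon
  have h3 : r + 2 ≤ a := by omega
  have h4 := Nat.choose_le_choose r h3
  have h5 : (r + 2).choose r = (r + 1).choose 2 + (r + 1) := by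
    rw [Nat.choose_symm_add, Nat.choose_succ_succ' (r + 1) 1]
    simp; ring
  have h6 : 0 < (r + 1).choose 2 := Nat.choose_pos (by omega)
  omega

lemma adj_arith (r s a K : ℕ) (hr : 1 ≤ r) (hs : 1 ≤ s) (ha : r ≤ a) (hK : s ≤ K)
    (h : (a + 1).choose r * K.choose s = a.choose r * (K + 1).choose s + 1) :
    (a = r ∨ r = 1) ∧ (K = s ∨ s = 1) ∧ r * (K + 1) = s * (a + 1) + 1 := by
  obtain ⟨r, rfl⟩ : ∃ r', r = r' + 1 := ⟨r - 1, by omega⟩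
  obtain ⟨s, rfl⟩ : ∃ r', s = r' + 1 := ⟨s - 1, by omega⟩
  rw [Nat.choose_succ_succ', Nat.choose_succ_succ'] at h
  have e1 := Nat.choose_succ_right_eq a r
  have e2 := Nat.choose_succ_right_eq K s
  have u := choose_ge_aux a r ha
  have v := choose_ge_aux K s hK
  have u' := choose_eq_aux a r ha
  have v' := choose_eq_aux K s hK
  obtain ⟨a, rfl⟩ : ∃ a', a = a' + r := ⟨a - r, by omega⟩
  obtain ⟨K, rfl⟩ : ∃ a', K = a' + s := ⟨K - s, by omega⟩
  simp only [Nat.add_sub_cancel] at e1 e2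
  generalize (a + r).choose r = U at *
  generalize (K + s).choose s = V at *
  generalize (a + r).choose (r + 1) = X at *
  generalize (K + s).choose (s + 1) = Y at *
  have h1 : U * Y = X * V + 1 := by nlinarith
  have h2 : (U : ℤ) * V * ((r + 1) * (K + s + 1) - (s + 1) * (a + r + 1)) = (r + 1) * (s + 1) := by
    zify at h1 e1 e2
    linear_combination (r + 1) * (s + 1) * h1 - (U : ℤ) * (r + 1) * e2 + (V : ℤ) * (s + 1) * e1
  have huv : (r + 1 : ℤ) * (s + 1) ≤ U * V := by
    have := Nat.mul_le_mul u v
    exact_mod_cast this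
  have hrs : (0 : ℤ) < (r + 1) * (s + 1) := by positivity
  set D : ℤ := (r + 1) * (K + s + 1) - (s + 1) * (a + r + 1) with hD
  have hD1 : D = 1 := by
    have hpos : 0 < D := by
      by_contra hc
      push Not at hc
      nlinarith
    by_contra hc
    have : 2 ≤ D := by omega
    nlinarith
  rw [hD1, mul_one] at h2
  have h3 : U * V = (r + 1) * (s + 1) := by exact_mod_cast h2
  have hU : U = r + 1 := by
    by_contra hc
    have : r + 2 ≤ U := by omega
    nlinarith
  have hV : V = s + 1 := by
    by_contra hc
    have : s + 2 ≤ V := by omega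
    nlinarith
  refine ⟨?_, ?_, ?_⟩
  · have := u' hU; omega
  · have := v' hV; omega
  · zify
    push_cast at *
    linarith

lemma sign_arith (r s A B : ℕ) (hr : r ≤ A) (hs : s ≤ B) :
    (A + 1).choose r * B.choose s < A.choose r * (B + 1).choose s ↔
      r * (B + 1) < s * (A + 1) := by
  have e1 := Nat.choose_mul_succ_eq A r
  have e2 := Nat.choose_mul_succ_eq B s
  have p1 : 0 < A.choose r := Nat.choose_pos hr
  have p2 : 0 < B.choose s := Nat.choose_pos hs
  obtain ⟨A, rfl⟩ : ∃ a', A = a' + r := ⟨A - r, by omega⟩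
  obtain ⟨B, rfl⟩ : ∃ a', B = a' + s := ⟨B - s, by omega⟩
  rw [show A + r + 1 - r = A + 1 by omega] at e1
  rw [show B + s + 1 - s = B + 1 by omega] at e2
  generalize (A + r).choose r = U at *
  generalize (B + s).choose s = V at *
  generalize (A + r + 1).choose r = X at *
  generalize (B + s + 1).choose s = Y at *
  have k1 : X * V * ((A + 1) * (B + 1)) = U * V * ((A + r + 1) * (B + 1)) := by
    calc X * V * ((A + 1) * (B + 1)) = (X * (A + 1)) * (V * (B + 1)) := by ring
      _ = _ := by rw [← e1]; ring
  have k2 : U * Y * ((A + 1) * (B + 1)) = U * V * ((B + s + 1) * (A + 1)) := by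
    calc U * Y * ((A + 1) * (B + 1)) = (Y * (B + 1)) * (U * (A + 1)) := by ring
      _ = _ := by rw [← e2]; ring
  have hp : 0 < (A + 1) * (B + 1) := by positivity
  have huv : 0 < U * V := by positivity
  rw [← Nat.mul_lt_mul_right hp, k1, k2, Nat.mul_lt_mul_left huv]
  constructor <;> intro h <;> nlinarith

lemma choose_pos_le {a r : ℕ} (h : a.choose r ≠ 0) : r ≤ a := by
  by_contra hc
  exact h (Nat.choose_eq_zero_of_lt (by omega))

lemma step_arith (r s c c' A B A' B' M : ℕ) (hA : A ≤ A') (hB : B' ≤ B) (hM : 2 ≤ M)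
    (h1 : A.choose r * (B + 1).choose s * c + 1 = M)
    (h2 : (A' + 1).choose r * B'.choose s * c' = M)
    (h3 : A'.choose r * (B' + 1).choose s * c' ≤ M)
    (h4 : (A + 1).choose r * B.choose s * c ≤ M) :
    (A + 1).choose r * B.choose s * c = M ∨ (A + 1).choose r * B.choose s * c + 1 = M := by
  by_contra hcon
  push Not at hcon
  have hlt : (A + 1).choose r * B.choose s * c < A.choose r * (B + 1).choose s * c := by omega
  have hlt' := lt_of_mul_lt_mul_right hlt (Nat.zero_le c)
  have hrA : r ≤ A := choose_pos_le (by rintro h; simp [h] at h1; omega)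
  have hsB : s ≤ B' := choose_pos_le (by rintro h; simp [h] at h2; omega)
  have hc' : 0 < c' := Nat.pos_of_ne_zero (by rintro rfl; simp at h2; omega)
  rw [sign_arith r s A B hrA (by omega)] at hlt'
  have : r * (B' + 1) < s * (A' + 1) := by
    calc r * (B' + 1) ≤ r * (B + 1) := by gcongr
      _ < _ := hlt'
      _ ≤ _ := by gcongr
  rw [← sign_arith r s A' B' (by omega) hsB, ← Nat.mul_lt_mul_right hc'] at this
  omega

lemma adj3 (r s t A B C n M : ℕ) (hr : 1 ≤ r) (hs : 1 ≤ s) (ht : 1 ≤ t) (hl : 4 ≤ r + s + t)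
    (hn : r + s + t + 2 ≤ n) (hM : 2 ≤ M) (hsum : A + (B + 1) + C = n)
    (hmax : ∀ a b c, a + b + c = n → a.choose r * b.choose s * c.choose t ≤ M)
    (h1 : A.choose r * (B + 1).choose s * C.choose t + 1 = M)
    (h2 : (A + 1).choose r * B.choose s * C.choose t = M) : False := by
  have hrA : r ≤ A := choose_pos_le (by rintro h; simp [h] at h1; omega)
  have hsB : s ≤ B := choose_pos_le (by rintro h; simp [h] at h2; omega)
  have htC : t ≤ C := choose_pos_le (by rintro h; simp [h] at h2; omega)
  have hc1 : C.choose t = 1 := by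
    have : C.choose t ∣ 1 := by
      have e : C.choose t ∣ A.choose r * (B + 1).choose s * C.choose t + 1 := by
        rw [h1, ← h2]; exact Dvd.intro_left _ rfl
      exact (Nat.dvd_add_right (Dvd.intro_left _ rfl)).mp e
    exact Nat.dvd_one.mp this
  rw [hc1, mul_one] at h1 h2
  obtain ⟨k1, k2, k3⟩ := adj_arith r s A B hr hs hrA hsB (by omega)
  have hCt : C = t := by
    by_contra hc
    have h5 := Nat.choose_le_choose t (show t + 1 ≤ C by omega)
    simp at h5
    omega
  subst hCt
  have hmx := hmax (A + 1) (B - 1) (C + 1) (by omega)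
  rcases k1 with rfl | rfl
  · rcases k2 with rfl | rfl
    · omega
    · have : A * B = 2 := by nlinarith
      have hB2 : 2 ≤ B := by omega
      have hA1 : A = 1 := by nlinarith
      subst hA1
      have hB2 : B = 2 := by omega
      subst hB2
      simp at hmx h2
      omega
  · rcases k2 with rfl | rfl
    · nlinarith
    · obtain rfl : B = A + 1 := by omega
      simp at hmx h2
      have h3 : 3 ≤ C + 1 := by omega
      have h4 := Nat.mul_le_mul_left ((A + 1) * A) h3
      nlinarith

lemma move3 (r s t A B C A' B' C' n M : ℕ) (hr : 1 ≤ r) (hs : 1 ≤ s) (ht : 1 ≤ t)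
    (hl : 4 ≤ r + s + t)
    (hn : r + s + t + 2 ≤ n) (hM : 2 ≤ M) (hsum : A + B + C = n) (hsum' : A' + B' + C' = n)
    (hmax : ∀ a b c, a + b + c = n → a.choose r * b.choose s * c.choose t ≤ M)
    (h1 : A.choose r * B.choose s * C.choose t + 1 = M)
    (h2 : A'.choose r * B'.choose s * C'.choose t = M) (hA : A < A') (hB : B' < B) :
    (A + 1).choose r * (B - 1).choose s * C.choose t + 1 = M := by
  obtain ⟨B, rfl⟩ : ∃ b, B = b + 1 := ⟨B - 1, by omega⟩
  obtain ⟨A', rfl⟩ : ∃ b, A' = b + 1 := ⟨A' - 1, by omega⟩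
  rcases step_arith r s (C.choose t) (C'.choose t) A B A' B' M (by omega) (by omega) hM h1 h2
    (hmax _ _ _ (by omega)) (hmax _ _ _ (by omega)) with h | h
  · exact (adj3 r s t A B C n M hr hs ht hl hn hM hsum hmax h1 h).elim
  · simpa using h

lemma no_product_eq (r s t n M : ℕ) (hr : 1 ≤ r) (hs : 1 ≤ s) (ht : 1 ≤ t)
    (hl : 4 ≤ r + s + t) (hn : r + s + t + 2 ≤ n) (hM : 2 ≤ M)
    (hmax : ∀ a b c, a + b + c = n → a.choose r * b.choose s * c.choose t ≤ M)
    (A' B' C' : ℕ) (hsum' : A' + B' + C' = n)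
    (h2 : A'.choose r * B'.choose s * C'.choose t = M) (d : ℕ) :
    ∀ A B C, (A - A') + (B - B') + (C - C') = d → A + B + C = n →
      A.choose r * B.choose s * C.choose t + 1 = M → False := by
  induction d with
  | zero =>
    intro A B C hd hsum h1
    obtain rfl : A = A' := by omega
    obtain rfl : B = B' := by omega
    obtain rfl : C = C' := by omega
    omega
  | succ d ih =>
    intro A B C hd hsum h1
    have c1 : ∀ x y z : ℕ, x * y * z = y * x * z := fun x y z => by ring
    have c2 : ∀ x y z : ℕ, x * y * z = x * z * y := fun x y z => by ring
    have c3 : ∀ x y z : ℕ, x * y * z = z * x * y := fun x y z => by ring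
    have c4 : ∀ x y z : ℕ, x * y * z = y * z * x := fun x y z => by ring
    have c5 : ∀ x y z : ℕ, x * y * z = z * y * x := fun x y z => by ring
    have hcase : (A < A' ∧ B' < B) ∨ (B < B' ∧ A' < A) ∨ (A < A' ∧ C' < C) ∨ (C < C' ∧ A' < A) ∨
      (B < B' ∧ C' < C) ∨ (C < C' ∧ B' < B) := by omega
    rcases hcase with ⟨p, q⟩ | ⟨p, q⟩ | ⟨p, q⟩ | ⟨p, q⟩ | ⟨p, q⟩ | ⟨p, q⟩
    · refine ih (A + 1) (B - 1) C (by omega) (by omega) ?_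
      exact move3 r s t A B C A' B' C' n M hr hs ht hl hn hM hsum hsum' hmax h1 h2 p q
    · refine ih (A - 1) (B + 1) C (by omega) (by omega) ?_
      rw [c1]
      exact move3 s r t B A C B' A' C' n M hs hr ht (by omega) (by omega) hM (by omega) (by omega)
        (fun a b c h => by rw [c1]; exact hmax _ _ _ (by omega)) (by rw [c1]; exact h1)
        (by rw [c1]; exact h2) p q
    · refine ih (A + 1) B (C - 1) (by omega) (by omega) ?_
      rw [c2]
      exact move3 r t s A C B A' C' B' n M hr ht hs (by omega) (by omega) hM (by omega) (by omega)
        (fun a b c h => by rw [c2]; exact hmax _ _ _ (by omega)) (by rw [c2]; exact h1)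
        (by rw [c2]; exact h2) p q
    · refine ih (A - 1) B (C + 1) (by omega) (by omega) ?_
      rw [c3]
      exact move3 t r s C A B C' A' B' n M ht hr hs (by omega) (by omega) hM (by omega) (by omega)
        (fun a b c h => by rw [c4]; exact hmax _ _ _ (by omega)) (by rw [c4]; exact h1)
        (by rw [c4]; exact h2) p q
    · refine ih A (B + 1) (C - 1) (by omega) (by omega) ?_
      rw [c4]
      exact move3 s t r B C A B' C' A' n M hs ht hr (by omega) (by omega) hM (by omega) (by omega)
        (fun a b c h => by rw [c3]; exact hmax _ _ _ (by omega)) (by rw [c3]; exact h1)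
        (by rw [c3]; exact h2) p q
    · refine ih A (B - 1) (C + 1) (by omega) (by omega) ?_
      rw [c5]
      exact move3 t s r C B A C' B' A' n M ht hs hr (by omega) (by omega) hM (by omega) (by omega)
        (fun a b c h => by rw [c5]; exact hmax _ _ _ (by omega)) (by rw [c5]; exact h1)
        (by rw [c5]; exact h2) p q

lemma choose_succ_strict (a r : ℕ) (hr : 1 ≤ r) (h : r ≤ a) :
    a.choose r + 1 ≤ (a + 1).choose r := by
  obtain ⟨r, rfl⟩ : ∃ r', r = r' + 1 := ⟨r - 1, by omega⟩
  rw [Nat.choose_succ_succ']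
  have := choose_ge_aux a r h
  omega

lemma choose_succ_strict2 (a r : ℕ) (hr : 2 ≤ r) (h : r ≤ a) :
    a.choose r + 2 ≤ (a + 1).choose r := by
  obtain ⟨r, rfl⟩ : ∃ r', r = r' + 1 := ⟨r - 1, by omega⟩
  rw [Nat.choose_succ_succ']
  have := choose_ge_aux a r h
  omega

/-- Products of binomials with total at most `n` never equal `M - 1`. -/
lemma no_product (r s t n M : ℕ) (hr : 1 ≤ r) (hs : 1 ≤ s) (ht : 1 ≤ t)
    (hl : 4 ≤ r + s + t) (hn : r + s + t + 2 ≤ n) (hM : 2 ≤ M)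
    (hmax : ∀ a b c, a + b + c = n → a.choose r * b.choose s * c.choose t ≤ M)
    (hex : ∃ a b c, a + b + c = n ∧ a.choose r * b.choose s * c.choose t = M)
    (A B C : ℕ) (hsum : A + B + C ≤ n)
    (h1 : A.choose r * B.choose s * C.choose t + 1 = M) : False := by
  obtain ⟨A', B', C', hs', h2⟩ := hex
  rcases Nat.lt_or_ge (A + B + C) n with hlt | hge
  · have hrA : r ≤ A := choose_pos_le (by rintro h; simp [h] at h1; omega)
    have hsB : s ≤ B := choose_pos_le (by rintro h; simp [h] at h1; omega)
    have htC : t ≤ C := choose_pos_le (by rintro h; simp [h] at h1; omega)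
    have pA : 0 < A.choose r := Nat.choose_pos hrA
    have pB : 0 < B.choose s := Nat.choose_pos hsB
    have pC : 0 < C.choose t := Nat.choose_pos htC
    obtain ⟨e, rfl⟩ : ∃ e, n = A + B + C + 1 + e := ⟨n - (A + B + C + 1), by omega⟩
    have m1 := hmax (A + 1 + e) B C (by omega)
    have m2 := hmax A (B + 1 + e) C (by omega)
    have m3 := hmax A B (C + 1 + e) (by omega)
    have n1 : (A + 1).choose r ≤ (A + 1 + e).choose r := Nat.choose_le_choose _ (by omega)
    have n2 : (B + 1).choose s ≤ (B + 1 + e).choose s := Nat.choose_le_choose _ (by omega)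
    have n3 : (C + 1).choose t ≤ (C + 1 + e).choose t := Nat.choose_le_choose _ (by omega)
    have hbc : 0 < B.choose s * C.choose t := by positivity
    have hac : 0 < A.choose r * C.choose t := by positivity
    have hab : 0 < A.choose r * B.choose s := by positivity
    have : 2 ≤ r ∨ 2 ≤ s ∨ 2 ≤ t := by omega
    rcases this with h | h | h
    · have k := choose_succ_strict2 A r h hrA
      have : (A.choose r + 2) * (B.choose s * C.choose t) ≤ M := by
        refine le_trans (Nat.mul_le_mul_right _ (k.trans n1)) ?_
        rw [← mul_assoc]; exact m1
      rw [add_mul, ← mul_assoc] at this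
      omega
    · have k := choose_succ_strict2 B s h hsB
      have : (B.choose s + 2) * (A.choose r * C.choose t) ≤ M := by
        refine le_trans (Nat.mul_le_mul_right _ (k.trans n2)) ?_
        refine le_trans (le_of_eq ?_) m2
        ring
      have e : B.choose s * (A.choose r * C.choose t) = A.choose r * B.choose s * C.choose t := by
        ring
      rw [add_mul, e] at this
      omega
    · have k := choose_succ_strict2 C t h htC
      have : (C.choose t + 2) * (A.choose r * B.choose s) ≤ M := by
        refine le_trans (Nat.mul_le_mul_right _ (k.trans n3)) ?_
        refine le_trans (le_of_eq ?_) m3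
        ring
      have e : C.choose t * (A.choose r * B.choose s) = A.choose r * B.choose s * C.choose t := by
        ring
      rw [add_mul, e] at this
      omega
  · exact no_product_eq r s t n M hr hs ht hl hn hM hmax A' B' C' hs' h2 _ A B C rfl (by omega) h1

/-- Two-variable version of the exchange argument: there is an adjacent pair. -/
lemma two_var (r t g a' b' : ℕ) (hg : 2 ≤ g)
    (hmax : ∀ a b, a + b = a' + b' → a.choose r * b.choose t ≤ g)
    (h2 : a'.choose r * b'.choose t = g) (d : ℕ) :
    ∀ a b, b - b' = d → a < a' → a + b = a' + b' → a.choose r * b.choose t + 1 = g →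
      ∃ i j, i + j + 1 = a' + b' ∧ (i + 1).choose r * j.choose t = g ∧
        i.choose r * (j + 1).choose t + 1 = g := by
  induction d with
  | zero => intro a b; omega
  | succ d ih =>
    intro a b hd ha hsum h1
    obtain ⟨b, rfl⟩ : ∃ c, b = c + 1 := ⟨b - 1, by omega⟩
    obtain ⟨a', rfl⟩ : ∃ c, a' = c + 1 := ⟨a' - 1, by omega⟩
    have := step_arith r t 1 1 a b a' b' g (by omega) (by omega) hg (by simpa using h1)
      (by simpa using h2) (by simpa using hmax _ _ (by omega)) (by simpa using hmax _ _ (by omega))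
    simp only [mul_one] at this
    rcases this with h | h
    · exact ⟨a, b, by omega, h, h1⟩
    · rcases Nat.lt_or_ge (a + 1) (a' + 1) with hlt | hge
      · exact ih (a + 1) b (by omega) hlt (by omega) h
      · obtain rfl : a = a' := by omega
        obtain rfl : b = b' := by omega
        omega

lemma s_one_adj (r t m n i j g : ℕ) (hr : 1 ≤ r) (ht : 1 ≤ t) (hl : 3 ≤ r + t) (hm : 2 ≤ m)
    (hg : 2 ≤ g) (hsum : i + j + 1 + m = n)
    (hmax : ∀ a b c, a + b + c = n → a.choose r * b * c.choose t ≤ m * g)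
    (h7 : 7 ≤ n ∨ ¬ (r = 2 ∧ t = 1))
    (h1 : (i + 1).choose r * j.choose t = g) (h2 : i.choose r * (j + 1).choose t + 1 = g) :
    False := by
  have hri : r ≤ i := choose_pos_le (by rintro h; simp [h] at h2; omega)
  have htj : t ≤ j := choose_pos_le (by rintro h; simp [h] at h1; omega)
  obtain ⟨k1, k2, k3⟩ := adj_arith r t i j hr ht hri htj (by omega)
  have hmx := hmax (i + 1) (m - 1) (j + 1) (by omega)
  have hmain : i = r → j = t → False := by
    rintro rfl rfl
    obtain rfl : i = j + 1 := by nlinarith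
    simp only [Nat.choose_succ_self_right, Nat.choose_self, mul_one] at h1 hmx
    obtain ⟨m, rfl⟩ : ∃ c, m = c + 2 := ⟨m - 2, by omega⟩
    subst h1
    simp only [show m + 2 - 1 = m + 1 by omega] at hmx
    have h4 : (m + 1) * (j + 1) ≤ m + 2 := by
      have : (j + 1 + 1) * ((m + 1) * (j + 1)) ≤ (j + 1 + 1) * (m + 2) := by nlinarith
      exact Nat.le_of_mul_le_mul_left this (by omega)
    have hj : j = 1 := by nlinarith
    subst hj
    have : m = 0 := by omega
    subst this
    omega
  rcases k1 with rfl | rfl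
  · rcases k2 with rfl | rfl
    · exact hmain rfl rfl
    · have h5 : i * j = 2 := by nlinarith
      have h6 : 2 ≤ i := by omega
      have h7 : j = 1 := by nlinarith
      exact hmain rfl h7
  · rcases k2 with rfl | rfl
    · nlinarith
    · omega

/-- The case of a middle run of length one. -/
lemma s_one (r t m n N g i j i' j' : ℕ) (hr : 1 ≤ r) (ht : 1 ≤ t) (hl : 3 ≤ r + t) (hm : 2 ≤ m)
    (hg0 : 1 ≤ g) (hsum : N + m = n)
    (hmax : ∀ a b c, a + b + c = n → a.choose r * b * c.choose t ≤ m * g)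
    (h7 : 7 ≤ n ∨ ¬ (r = 2 ∧ t = 1 ∨ r = 1 ∧ t = 2))
    (hij : i + j = N) (hij' : i' + j' = N)
    (h1 : i'.choose r * j'.choose t = g) (h2 : i.choose r * j.choose t + 1 = g) :
    False := by
  have hg2 : ∀ a b, a + b = N → a.choose r * b.choose t ≤ g := by
    intro a b hab
    have := hmax a m b (by omega)
    have h3 : m * (a.choose r * b.choose t) ≤ m * g := by nlinarith
    exact Nat.le_of_mul_le_mul_left h3 (by omega)
  have hg : 2 ≤ g := by
    by_contra hcon
    obtain rfl : g = 1 := by omega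
    have hri : r ≤ i' := choose_pos_le (by rintro h; simp [h] at h1)
    have htj : t ≤ j' := choose_pos_le (by rintro h; simp [h] at h1)
    have c1 : i'.choose r = 1 := Nat.eq_one_of_mul_eq_one_right h1
    have c2 : j'.choose t = 1 := Nat.eq_one_of_mul_eq_one_left h1
    obtain ⟨m, rfl⟩ : ∃ c, m = c + 2 := ⟨m - 2, by omega⟩
    rcases (by omega : 2 ≤ r ∨ 2 ≤ t) with h | h
    · have := choose_succ_strict2 i' r h hri
      have hh := hmax (i' + 1) (m + 1) j' (by omega)
      rw [c2] at hh
      nlinarith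
    · have := choose_succ_strict2 j' t h htj
      have hh := hmax i' (m + 1) (j' + 1) (by omega)
      rw [c1] at hh
      nlinarith
  rcases lt_trichotomy i i' with hlt | heq | hgt
  · obtain ⟨a, b, hab, k1, k2⟩ := two_var r t g i' j' hg (fun a b h => hg2 a b (by omega)) h1 _
      i j rfl hlt (by omega) h2
    exact s_one_adj r t m n a b g hr ht hl hm hg (by omega) hmax (by omega) k1 k2
  · obtain rfl := heq
    obtain rfl : j = j' := by omega
    omega
  · obtain ⟨a, b, hab, k1, k2⟩ := two_var t r g j' i' hg
      (fun a b h => by rw [mul_comm]; exact hg2 b a (by omega)) (by rw [mul_comm]; exact h1) _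
      j i rfl (by omega) (by omega) (by rw [mul_comm]; exact h2)
    refine s_one_adj t r m n a b g ht hr (by omega) hm hg (by omega) ?_ (by omega) k1 k2
    intro a b c h
    have := hmax c b a (by omega)
    nlinarith

/-! ### Counting occurrences -/

lemma occ_nil_left (w : List Bool) : occ [] w = 1 := by
  unfold occ
  rw [(List.sublists_perm_sublists' w).count_eq]
  induction w with
  | nil => simp
  | cons a w ih =>
    rw [List.sublists'_cons, List.count_append, ih, List.count_eq_zero_of_not_mem]
    simp

lemma occ_nil_right (a : Bool) (p : List Bool) : occ (a :: p) [] = 0 := by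
  simp [occ, List.count_cons]

lemma occ_cons_cons (a b : Bool) (p w : List Bool) :
    occ (a :: p) (b :: w) = occ (a :: p) w + if b = a then occ p w else 0 := by
  unfold occ
  rw [(List.sublists_perm_sublists' (b :: w)).count_eq, (List.sublists_perm_sublists' w).count_eq,
    (List.sublists_perm_sublists' w).count_eq, List.sublists'_cons, List.count_append]
  congr 1
  split_ifs with h
  · subst h
    exact List.count_map_of_injective _ _ (List.cons_injective) _
  · apply List.count_eq_zero_of_not_mem
    simp [h]

lemma not_ne (x : Bool) : (!x) ≠ x := by cases x <;> simp

lemma occ_rep (x : Bool) (t : ℕ) (w : List Bool) :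
    occ (List.replicate t x) w = (w.count x).choose t := by
  induction w generalizing t with
  | nil => cases t with
    | zero => simp [occ_nil_left]
    | succ t => simp [List.replicate_succ, occ_nil_right]
  | cons b w ih => cases t with
    | zero => simp [occ_nil_left]
    | succ t =>
      rw [List.replicate_succ, occ_cons_cons, ← List.replicate_succ, ih, ih, List.count_cons]
      by_cases h : b = x
      · simp [h, Nat.choose_succ_succ']; omega
      · simp [h]

/-- Numbers of letters `x` after the last chosen letter, over all choices of `k` letters `!x`. -/
def afters (x : Bool) : ℕ → List Bool → List ℕ
  | 0, w => [w.count x]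
  | _ + 1, [] => []
  | k + 1, b :: w => if b = x then afters x (k + 1) w else afters x (k + 1) w ++ afters x k w

/-- Pairs (number of `x` before, number of `x` after), over all choices of `k + 1` letters `!x`,
where `i` letters `x` were already seen. -/
def prs (x : Bool) (k : ℕ) : ℕ → List Bool → List (ℕ × ℕ)
  | _, [] => []
  | i, b :: w => if b = x then prs x k (i + 1) w
      else prs x k i w ++ (afters x k w).map (fun j => (i, j))

lemma occ_afters (x : Bool) (t k : ℕ) (w : List Bool) :
    occ (List.replicate k (!x) ++ List.replicate t x) w
      = ((afters x k w).map (fun j => j.choose t)).sum := by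
  induction w generalizing k with
  | nil => cases k with
    | zero => simp [occ_rep, afters]
    | succ k => simp [List.replicate_succ, occ_nil_right, afters]
  | cons b w ih => cases k with
    | zero => simp [occ_rep, afters]
    | succ k =>
      rw [List.replicate_succ, List.cons_append, occ_cons_cons, ← List.cons_append,
        ← List.replicate_succ, ih, ih, afters]
      by_cases h : b = x
      · simp [h, (not_ne x).symm]
      · have : b = !x := by cases b <;> cases x <;> simp_all
        simp [this]

lemma occ_insert (x : Bool) (r i : ℕ) (q w : List Bool) :
    occ (List.replicate r x ++ (!x) :: q) (List.replicate i x ++ (!x) :: w)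
      = occ (List.replicate r x ++ (!x) :: q) (List.replicate i x ++ w)
        + i.choose r * occ q w := by
  induction i generalizing r with
  | zero => cases r with
    | zero => simp [occ_cons_cons]
    | succ r => simp [List.replicate_succ, occ_cons_cons]
  | succ i ih => cases r with
    | zero =>
      have := ih 0
      simp only [List.replicate_zero, List.nil_append, Nat.choose_zero_right] at this
      simp [List.replicate_succ, occ_cons_cons, this, (not_ne x).symm]
    | succ r =>
      have h1 := ih (r + 1)
      have h2 := ih r
      simp only [List.replicate_succ, List.cons_append, occ_cons_cons, if_true] at h1 h2 ⊢
      rw [h1, h2, Nat.choose_succ_succ']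
      ring

lemma occ_prs (x : Bool) (r k t i : ℕ) (w : List Bool) :
    occ (List.replicate r x ++ (List.replicate (k + 1) (!x) ++ List.replicate t x))
      (List.replicate i x ++ w)
      = ((prs x k i w).map (fun q => q.1.choose r * q.2.choose t)).sum := by
  induction w generalizing i with
  | nil =>
    simp only [prs, List.map_nil, List.sum_nil, List.append_nil]
    unfold occ
    apply List.count_eq_zero_of_not_mem
    rw [List.mem_sublists]
    intro h
    have h1 : (!x) ∈ List.replicate i x := h.subset (by simp)
    have := List.eq_of_mem_replicate h1
    exact not_ne x this
  | cons b w ih =>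
    by_cases h : b = x
    · subst h
      rw [prs, if_pos rfl, ← ih, List.replicate_succ' (n := i)]
      simp
    · have hb : b = !x := by cases b <;> cases x <;> simp_all
      subst hb
      rw [prs, if_neg h, List.map_append, List.sum_append, ← ih, List.replicate_succ,
        List.cons_append, occ_insert, occ_afters, List.map_map]
      congr 1
      rw [← List.sum_map_mul_left]
      rfl

lemma afters_length (x : Bool) (k : ℕ) (w : List Bool) :
    (afters x k w).length = (w.count (!x)).choose k := by
  induction w generalizing k with
  | nil => cases k <;> simp [afters]
  | cons b w ih => cases k with
    | zero => simp [afters]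
    | succ k =>
      by_cases h : b = x
      · subst h
        simp [afters, ih, List.count_cons, (not_ne b).symm]
      · have hb : b = !x := by cases b <;> cases x <;> simp_all
        subst hb
        simp [afters, ih, Nat.choose_succ_succ']; omega

lemma prs_length (x : Bool) (k i : ℕ) (w : List Bool) :
    (prs x k i w).length = (w.count (!x)).choose (k + 1) := by
  induction w generalizing i with
  | nil => simp [prs]
  | cons b w ih =>
    by_cases h : b = x
    · subst h
      simp [prs, ih, List.count_cons, (not_ne b).symm]
    · have hb : b = !x := by cases b <;> cases x <;> simp_all
      subst hb
      simp [prs, ih, afters_length, Nat.choose_succ_succ']; omega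

lemma afters_le (x : Bool) (k : ℕ) (w : List Bool) : ∀ j ∈ afters x k w, j ≤ w.count x := by
  induction w generalizing k with
  | nil => cases k <;> simp [afters]
  | cons b w ih => cases k with
    | zero => simp [afters]
    | succ k =>
      intro j hj
      have hc : w.count x ≤ (b :: w).count x := List.count_le_count_cons
      rw [afters] at hj
      split_ifs at hj
      · exact (ih _ j hj).trans hc
      · rcases List.mem_append.mp hj with h | h
        · exact (ih _ j h).trans hc
        · exact (ih _ j h).trans hc

lemma prs_le (x : Bool) (k i : ℕ) (w : List Bool) :
    ∀ q ∈ prs x k i w, q.1 + q.2 ≤ i + w.count x ∧ i ≤ q.1 := by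
  induction w generalizing i with
  | nil => simp [prs]
  | cons b w ih =>
    intro q hq
    rw [prs] at hq
    by_cases h : b = x
    · subst h
      rw [if_pos rfl] at hq
      have := ih _ q hq
      simp only [List.count_cons_self]
      omega
    · rw [if_neg h] at hq
      have hc : w.count x ≤ (b :: w).count x := List.count_le_count_cons
      rcases List.mem_append.mp hq with h | h
      · have := ih _ q h
        omega
      · obtain ⟨j, hj, rfl⟩ := List.mem_map.mp h
        have := afters_le x k w j hj
        simp only
        omega

lemma prs_zero (x : Bool) (i : ℕ) (w : List Bool) :
    ∀ q ∈ prs x 0 i w, q.1 + q.2 = i + w.count x := by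
  induction w generalizing i with
  | nil => simp [prs]
  | cons b w ih =>
    intro q hq
    rw [prs] at hq
    by_cases h : b = x
    · subst h
      rw [if_pos rfl] at hq
      have := ih _ q hq
      simp only [List.count_cons_self]
      omega
    · rw [if_neg h] at hq
      rw [List.count_cons_of_ne h]
      rcases List.mem_append.mp hq with h | h
      · exact ih _ q h
      · obtain ⟨j, hj, rfl⟩ := List.mem_map.mp h
        simp [afters] at hj
        simp [hj]

lemma afters_min (x : Bool) (w : List Bool) : ∃ β, (∀ k, ∀ j ∈ afters x k w, β ≤ j) ∧
    (∀ k, 1 ≤ k → k ≤ w.count (!x) → β ∈ afters x k w) ∧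
    (∀ k i, ∀ q ∈ prs x k i w, β ≤ q.2) ∧ (w.count (!x) = 0 → β = w.count x) := by
  induction w with
  | nil =>
    refine ⟨0, by simp, ?_, by simp, by simp⟩
    intro k h1 h2
    simp at h2
    omega
  | cons b w ih =>
    obtain ⟨β, h1, h2, h3, h4⟩ := ih
    by_cases h : b = x
    · subst h
      by_cases h0 : w.count (!b) = 0
      · refine ⟨w.count b + 1, ?_, ?_, ?_, ?_⟩
        · intro k j hj
          cases k with
          | zero => simp [afters] at hj; omega
          | succ k =>
            have := afters_length b (k + 1) (b :: w)
            rw [List.count_cons_of_ne (not_ne b).symm, h0] at this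
            simp at this
            simp [this] at hj
        · intro k k1 k2
          rw [List.count_cons_of_ne (not_ne b).symm, h0] at k2
          omega
        · intro k i q hq
          have := prs_length b k i (b :: w)
          rw [List.count_cons_of_ne (not_ne b).symm, h0] at this
          simp at this
          simp [this] at hq
        · simp
      · refine ⟨β, ?_, ?_, ?_, ?_⟩
        · intro k j hj
          cases k with
          | zero =>
            have := h1 0 (w.count b) (by simp [afters])
            simp [afters] at hj; omega
          | succ k =>
            rw [afters, if_pos rfl] at hj
            exact h1 _ j hj
        · intro k k1 k2
          obtain ⟨k, rfl⟩ : ∃ c, k = c + 1 := ⟨k - 1, by omega⟩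
          rw [List.count_cons_of_ne (not_ne b).symm] at k2
          rw [afters, if_pos rfl]
          exact h2 _ k1 k2
        · intro k i q hq
          rw [prs, if_pos rfl] at hq
          exact h3 _ _ q hq
        · intro h5
          rw [List.count_cons_of_ne (not_ne b).symm] at h5
          exact absurd h5 h0
    · have hb : b = !x := by cases b <;> cases x <;> simp_all
      subst hb
      refine ⟨β, ?_, ?_, ?_, by simp⟩
      · intro k j hj
        cases k with
        | zero =>
          have := h1 0 (w.count x) (by simp [afters])
          simp [afters, List.count_cons_of_ne h] at hj; omega
        | succ k =>
          rw [afters, if_neg h] at hj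
          rcases List.mem_append.mp hj with h | h
          · exact h1 _ j h
          · exact h1 _ j h
      · intro k k1 k2
        obtain ⟨k, rfl⟩ : ∃ c, k = c + 1 := ⟨k - 1, by omega⟩
        rw [List.count_cons_self] at k2
        rw [afters, if_neg h, List.mem_append]
        by_cases hk : k + 1 ≤ w.count (!x)
        · exact Or.inl (h2 _ k1 hk)
        · right
          cases k with
          | zero => simp [afters]; exact h4 (by omega)
          | succ k => exact h2 _ (by omega) (by omega)
      · intro k i q hq
        rw [prs, if_neg h] at hq
        rcases List.mem_append.mp hq with h | h
        · exact h3 _ _ q h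
        · obtain ⟨j, hj, rfl⟩ := List.mem_map.mp h
          exact h1 _ j hj

lemma split_first (x : Bool) (w : List Bool) (h : 1 ≤ w.count (!x)) :
    ∃ a v, w = List.replicate a x ++ (!x) :: v := by
  induction w with
  | nil => simp at h
  | cons b w ih =>
    by_cases hb : b = x
    · subst hb
      rw [List.count_cons_of_ne (not_ne b).symm] at h
      obtain ⟨a, v, rfl⟩ := ih h
      exact ⟨a + 1, v, by simp [List.replicate_succ]⟩
    · have hb : b = !x := by cases b <;> cases x <;> simp_all
      exact ⟨0, w, by simp [hb]⟩

lemma prs_rep (x : Bool) (k i a : ℕ) (w : List Bool) :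
    prs x k i (List.replicate a x ++ w) = prs x k (i + a) w := by
  induction a generalizing i with
  | zero => simp
  | succ a ih =>
    rw [List.replicate_succ, List.cons_append, prs, if_pos rfl, ih]
    congr 1; omega

lemma afters_rep (x : Bool) (k a : ℕ) (w : List Bool) :
    afters x (k + 1) (List.replicate a x ++ w) = afters x (k + 1) w := by
  induction a with
  | zero => simp
  | succ a ih => rw [List.replicate_succ, List.cons_append, afters, if_pos rfl, ih]

/-! ### Deficits -/

lemma sum_deficit {α : Type} (L : List α) (φ : α → ℕ) (g : ℕ) (h : ∀ q ∈ L, φ q ≤ g) :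
    (L.map φ).sum + (L.map (fun q => g - φ q)).sum = L.length * g := by
  induction L with
  | nil => simp
  | cons q L ih =>
    have h1 := ih (fun q hq => h q (List.mem_cons_of_mem _ hq))
    have h2 := h q List.mem_cons_self
    simp only [List.map_cons, List.sum_cons, List.length_cons]
    rw [Nat.add_mul]
    omega

lemma sum_map_zero {α : Type} (L : List α) (f : α → ℕ) (h : ∀ q ∈ L, f q = 0) :
    (L.map f).sum = 0 := by
  apply List.sum_eq_zero
  intro y hy
  obtain ⟨q, hq, rfl⟩ := List.mem_map.mp hy
  exact h q hq

lemma le_sum_map {α : Type} (L : List α) (f : α → ℕ) (q : α) (h : q ∈ L) :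
    f q ≤ (L.map f).sum :=
  List.le_sum_of_mem (List.mem_map_of_mem h)

lemma deficit_two (x : Bool) (r t k g : ℕ) (w : List Bool) (hm : k + 3 ≤ w.count (!x))
    (hg : 1 ≤ g)
    (hmax : ∀ i j, i + j ≤ w.count x → i.choose r * j.choose t ≤ g) :
    ((prs x (k + 1) 0 w).map (fun q => g - q.1.choose r * q.2.choose t)).sum ≠ 1 := by
  obtain ⟨a, w1, rfl⟩ := split_first x w (by omega)
  simp only [List.count_append, List.count_replicate, List.count_cons_self] at hm
  simp only [beq_iff_eq, (not_ne x).symm, if_false] at hm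
  obtain ⟨b, v, rfl⟩ := split_first x w1 (by omega)
  simp only [List.count_append, List.count_replicate, List.count_cons_self] at hm
  simp only [beq_iff_eq, (not_ne x).symm, if_false] at hm
  have hN : (List.replicate a x ++ (!x) :: (List.replicate b x ++ (!x) :: v)).count x
      = a + b + v.count x := by
    simp [List.count_append, List.count_cons_of_ne (not_ne x)]; omega
  rw [hN] at hmax
  rw [prs_rep, prs, if_neg (not_ne x), prs_rep, prs, if_neg (not_ne x), afters_rep, afters,
    if_neg (not_ne x)]
  simp only [List.map_append, List.sum_append, List.map_map, Function.comp_def, zero_add]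
  obtain ⟨β, h1, h2, h3, -⟩ := afters_min x v
  have hm2 : k + 1 ≤ v.count (!x) := by omega
  have hmono : ∀ i j, a ≤ i → β ≤ j → a.choose r * β.choose t ≤ i.choose r * j.choose t :=
    fun i j hi hj => Nat.mul_le_mul (Nat.choose_le_choose _ hi) (Nat.choose_le_choose _ hj)
  by_cases h0 : g ≤ a.choose r * β.choose t
  · rw [sum_map_zero, sum_map_zero, sum_map_zero, sum_map_zero]
    · simp
    · intro j hj
      have := hmono a j le_rfl (h1 _ j hj)
      omega
    · intro j hj
      have := hmono a j le_rfl (h1 _ j hj)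
      omega
    · intro j hj
      have := hmono (a + b) j (by omega) (h1 _ j hj)
      omega
    · intro q hq
      have := hmono q.1 q.2 (by have := (prs_le x _ _ _ q hq).2; omega) (h3 _ _ q hq)
      omega
  · have s3 := le_sum_map (afters x (k + 1) v) (fun j => g - a.choose r * j.choose t) β
      (h2 _ (by omega) hm2)
    cases k with
    | succ k =>
      have s4 := le_sum_map (afters x (k + 1) v) (fun j => g - a.choose r * j.choose t) β
        (h2 _ (by omega) (by omega))
      omega
    | zero =>
      have s2 := le_sum_map (afters x (0 + 1) v) (fun j => g - (a + b).choose r * j.choose t) β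
        (h2 _ (by omega) hm2)
      intro hsum
      have s4 : ((afters x 0 v).map (fun j => g - a.choose r * j.choose t)).sum
        = g - a.choose r * (v.count x).choose t := by simp [afters]
      rw [s4] at hsum
      have hβ : β ≤ v.count x := h1 0 _ (by simp [afters])
      have m1 := hmax (a + b) (v.count x) (by omega)
      have m2 := hmax (a + b) β (by omega)
      have m3 := hmax a (v.count x) (by omega)
      have e1 : a.choose r * (v.count x).choose t = g := by omega
      have e2 : (a + b).choose r * β.choose t = g := by omega
      have e3 : a.choose r * β.choose t + 1 = g := by omega
      have e4 : ((a + b).choose r * (v.count x).choose t) * (a.choose r * β.choose t) = g * g := by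
        calc _ = (a.choose r * (v.count x).choose t) * ((a + b).choose r * β.choose t) := by ring
          _ = g * g := by rw [e1, e2]
      generalize a.choose r * β.choose t = u at *
      nlinarith

lemma exists_opt (r t N : ℕ) : ∃ i' j', i' + j' = N ∧
    ∀ i j, i + j ≤ N → i.choose r * j.choose t ≤ i'.choose r * j'.choose t := by
  obtain ⟨i', hi', h⟩ := Finset.exists_max_image (Finset.range (N + 1))
    (fun i => i.choose r * (N - i).choose t) ⟨0, by simp⟩
  rw [Finset.mem_range] at hi'
  refine ⟨i', N - i', by omega, fun i j hij => ?_⟩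
  refine le_trans ?_ (h i (Finset.mem_range.mpr (by omega)))
  exact Nat.mul_le_mul_left _ (Nat.choose_le_choose _ (by omega))

lemma count_add (x : Bool) (w : List Bool) : w.count x + w.count (!x) = w.length := by
  cases x <;> simp

/-- The word with three runs. -/
def threeWord (x : Bool) (r s t : ℕ) : List Bool :=
  List.replicate r x ++ (List.replicate s (!x) ++ List.replicate t x)

lemma occ_upper (x : Bool) (r s t : ℕ) (hs : 1 ≤ s) (w : List Bool) :
    ∃ i j, i + w.count (!x) + j = w.length ∧
      occ (threeWord x r s t) w ≤ i.choose r * (w.count (!x)).choose s * j.choose t := by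
  obtain ⟨k, rfl⟩ : ∃ k, s = k + 1 := ⟨s - 1, by omega⟩
  obtain ⟨i', j', hij, hopt⟩ := exists_opt r t (w.count x)
  have hc := count_add x w
  refine ⟨i', j', by omega, ?_⟩
  have h := occ_prs x r k t 0 w
  rw [List.replicate_zero, List.nil_append] at h
  unfold threeWord
  rw [h]
  have h2 := sum_deficit (prs x k 0 w) (fun q => q.1.choose r * q.2.choose t)
    (i'.choose r * j'.choose t) (fun q hq => hopt _ _ (by have := (prs_le x k 0 w q hq).1; omega))
  rw [prs_length] at h2
  have e : i'.choose r * (w.count (!x)).choose (k + 1) * j'.choose t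
    = (w.count (!x)).choose (k + 1) * (i'.choose r * j'.choose t) := by ring
  rw [e]
  omega

lemma exists_pos_of_sum {α : Type} (L : List α) (f : α → ℕ) (h : (L.map f).sum = 1) :
    ∃ q ∈ L, f q = 1 := by
  by_contra hcon
  push Not at hcon
  have : (L.map f).sum = 0 := by
    apply sum_map_zero
    intro q hq
    have h1 := le_sum_map L f q hq
    have h2 := hcon q hq
    omega
  omega

theorem core (x : Bool) (r s t n M : ℕ) (hr : 1 ≤ r) (hs : 1 ≤ s) (ht : 1 ≤ t)
    (hl : 4 ≤ r + s + t) (hn : r + s + t + 2 ≤ n) (hM : 2 ≤ M)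
    (h7 : 7 ≤ n ∨ ¬ (s = 1 ∧ (r = 2 ∧ t = 1 ∨ r = 1 ∧ t = 2)))
    (hmax : ∀ a b c, a + b + c = n → a.choose r * b.choose s * c.choose t ≤ M)
    (hex : ∃ a b c, a + b + c = n ∧ a.choose r * b.choose s * c.choose t = M)
    (w : List Bool) (hw : w.length = n) : occ (threeWord x r s t) w + 1 ≠ M := by
  intro hocc
  have hno := no_product r s t n M hr hs ht hl hn hM hmax hex
  obtain ⟨k, rfl⟩ : ∃ k, s = k + 1 := ⟨s - 1, by omega⟩
  obtain ⟨i', j', hij, hopt⟩ := exists_opt r t (w.count x)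
  have hc := count_add x w
  have h := occ_prs x r k t 0 w
  rw [List.replicate_zero, List.nil_append] at h
  unfold threeWord at hocc
  rw [h] at hocc
  have hle : ∀ q ∈ prs x k 0 w, q.1.choose r * q.2.choose t ≤ i'.choose r * j'.choose t :=
    fun q hq => hopt _ _ (by have := (prs_le x k 0 w q hq).1; omega)
  have h2 := sum_deficit (prs x k 0 w) (fun q => q.1.choose r * q.2.choose t)
    (i'.choose r * j'.choose t) hle
  have hlen := prs_length x k 0 w
  have hb := hmax i' (w.count (!x)) j' (by omega)
  have hb' : i'.choose r * (w.count (!x)).choose (k + 1) * j'.choose t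
    = (prs x k 0 w).length * (i'.choose r * j'.choose t) := by rw [hlen]; ring
  rw [hb'] at hb
  rcases Nat.eq_zero_or_pos ((prs x k 0 w).map
    (fun q => i'.choose r * j'.choose t - q.1.choose r * q.2.choose t)).sum with hd | hd
  · -- no deficit
    apply hno i' (w.count (!x)) j' (by omega)
    rw [hb']
    omega
  have hd1 : ((prs x k 0 w).map
    (fun q => i'.choose r * j'.choose t - q.1.choose r * q.2.choose t)).sum = 1 := by omega
  have hMe : (prs x k 0 w).length * (i'.choose r * j'.choose t) = M := by omega
  obtain ⟨q, hq, hq1⟩ := exists_pos_of_sum _ _ hd1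
  have hg : 1 ≤ i'.choose r * j'.choose t := by omega
  have hqs := (prs_le x k 0 w q hq).1
  rcases lt_trichotomy (w.count (!x)) (k + 1) with hlt | heq | hgt
  · rw [Nat.choose_eq_zero_of_lt hlt] at hlen
    rw [hlen] at hMe
    omega
  · rw [heq, Nat.choose_self] at hlen
    rw [hlen, one_mul] at hMe
    apply hno q.1 (k + 1) q.2 (by omega)
    rw [Nat.choose_self, mul_one]
    omega
  · cases k with
    | succ k => exact deficit_two x r t k _ w (by omega) hg hopt hd1
    | zero =>
      have hq2 := prs_zero x 0 w q hq
      simp only [zero_add, Nat.choose_one_right] at hlen hmax hq2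
      rw [hlen] at hMe
      rw [← hMe] at hmax
      exact s_one r t (w.count (!x)) n (w.count x) (i'.choose r * j'.choose t) q.1 q.2 i' j' hr ht
        (by omega) (by omega) hg (by omega) hmax (by omega) hq2 hij rfl (by omega)

lemma occ_threeWord (x : Bool) (r s t a b c : ℕ) (hs : 1 ≤ s) :
    a.choose r * b.choose s * c.choose t ≤ occ (threeWord x r s t) (threeWord x a b c) := by
  obtain ⟨k, rfl⟩ : ∃ k, s = k + 1 := ⟨s - 1, by omega⟩
  unfold threeWord
  rw [occ_prs]
  have h : ∀ b k, afters x k (List.replicate b (!x) ++ List.replicate c x)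
      = List.replicate (b.choose k) c := by
    intro b
    induction b with
    | zero => intro k; cases k with
      | zero => simp [afters]
      | succ k =>
        have := afters_rep x k c []
        simp only [List.append_nil] at this
        simp [this, afters]
    | succ b ih => intro k; cases k with
      | zero => simp [afters, List.count_replicate, List.replicate_succ,
          List.count_cons_of_ne (not_ne x)]
      | succ k =>
        rw [List.replicate_succ, List.cons_append, afters, if_neg (not_ne x), ih, ih,
          ← List.replicate_add, Nat.choose_succ_succ', Nat.add_comm]
  have h2 : prs x k a (List.replicate b (!x) ++ List.replicate c x)
      = List.replicate (b.choose (k + 1)) (a, c) := by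
    induction b with
    | zero =>
      have := prs_rep x k a c []
      simp only [List.append_nil] at this
      simp [this, prs]
    | succ b ih =>
      rw [List.replicate_succ, List.cons_append, prs, if_neg (not_ne x), ih, h,
        List.map_replicate, ← List.replicate_add, Nat.choose_succ_succ', Nat.add_comm]
  rw [h2]
  simp
  apply le_of_eq; ring

/-! ### Reduction to words with three runs -/

lemma chain_replicate (l : List Bool) (hne : l ≠ []) (h : l.IsChain (fun a b => (a == b) = true)) :
    ∃ k x, l = List.replicate (k + 1) x := by
  induction l with
  | nil => exact absurd rfl hne
  | cons a l ih =>
    cases l with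
    | nil => exact ⟨0, a, rfl⟩
    | cons b l =>
      rw [List.isChain_cons_cons] at h
      obtain ⟨k, x, hk⟩ := ih (by simp) h.2
      rw [List.replicate_succ, List.cons.injEq] at hk
      have hab : a = b := by simpa using h.1
      refine ⟨k + 1, x, ?_⟩
      rw [hab, hk.1, hk.2, ← List.replicate_succ, ← List.replicate_succ]

lemma three_runs_form (p : List Bool) (h : numRuns p = 3) :
    ∃ x r s t, 1 ≤ r ∧ 1 ≤ s ∧ 1 ≤ t ∧ p = threeWord x r s t := by
  unfold numRuns runs at h
  obtain ⟨l1, l2, l3, he⟩ := List.length_eq_three.mp h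
  have hf := List.flatten_splitBy (· == ·) p
  have hc := List.isChain_getLast_head_splitBy (· == ·) p
  have hm : ∀ m ∈ p.splitBy (· == ·), ∃ k x, m = List.replicate (k + 1) x := fun m hm =>
    chain_replicate m (List.ne_nil_of_mem_splitBy hm) (List.isChain_of_mem_splitBy hm)
  rw [he] at hf hc hm
  obtain ⟨r, x, rfl⟩ := hm l1 (by simp)
  obtain ⟨s, y, rfl⟩ := hm l2 (by simp)
  obtain ⟨t, z, rfl⟩ := hm l3 (by simp)
  simp at hc
  obtain rfl : y = !x := by cases x <;> cases y <;> simp_all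
  obtain rfl : z = x := by cases x <;> cases z <;> simp_all
  refine ⟨z, r + 1, s + 1, t + 1, by omega, by omega, by omega, ?_⟩
  rw [← hf]
  simp [threeWord]

lemma B_eq_zero_iff (n : ℕ) (p : List Bool) (k : ℕ) :
    B n p k = 0 ↔ ∀ w : List Bool, w.length = n → occ p w ≠ k := by
  unfold B
  have hfin : Finite {w : List Bool // w.length = n ∧ occ p w = k} :=
    Set.Finite.subset (List.finite_length_eq Bool n) (fun w hw => hw.1)
  rw [Nat.card_eq_zero]
  constructor
  · rintro (h | h) w h1 h2
    · exact h.false ⟨w, h1, h2⟩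
    · exact absurd hfin (not_finite_iff_infinite.mpr h)
  · intro h
    left
    exact ⟨fun w => h w.1 w.2.1 w.2.2⟩

lemma bdd_occ (n : ℕ) (p : List Bool) : BddAbove {k | ∃ w : List Bool, w.length = n ∧ occ p w = k} := by
  refine ⟨2 ^ n, ?_⟩
  rintro k ⟨w, hw, rfl⟩
  unfold occ
  refine List.count_le_length.trans ?_
  rw [List.length_sublists, hw]

lemma occ_le_max (n : ℕ) (p w : List Bool) (hw : w.length = n) : occ p w ≤ maxOcc n p :=
  le_csSup (bdd_occ n p) ⟨w, hw, rfl⟩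

lemma exists_max (n : ℕ) (p : List Bool) : ∃ w : List Bool, w.length = n ∧ occ p w = maxOcc n p :=
  Nat.sSup_mem (s := {k | ∃ w : List Bool, w.length = n ∧ occ p w = k})
    ⟨_, List.replicate n true, by simp, rfl⟩ (bdd_occ n p)

lemma main_aux (x : Bool) (r s t n : ℕ) (hr : 1 ≤ r) (hs : 1 ≤ s) (ht : 1 ≤ t)
    (hl : 4 ≤ r + s + t) (hn : r + s + t + 2 ≤ n)
    (h7 : 7 ≤ n ∨ ¬ (s = 1 ∧ (r = 2 ∧ t = 1 ∨ r = 1 ∧ t = 2))) :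
    B n (threeWord x r s t) (maxOcc n (threeWord x r s t) - 1) = 0 ∧
      HasInternalZeroAt (threeWord x r s t) n := by
  set p := threeWord x r s t with hp
  have hmax : ∀ a b c, a + b + c = n → a.choose r * b.choose s * c.choose t ≤ maxOcc n p := by
    intro a b c h
    exact (occ_threeWord x r s t a b c hs).trans
      (occ_le_max n p _ (by simp [threeWord]; omega))
  have hM : 2 ≤ maxOcc n p := by
    have h1 := hmax (n - s - t) s t (by omega)
    rw [Nat.choose_self, Nat.choose_self, mul_one, mul_one] at h1
    have h2 := choose_succ_strict r r hr le_rfl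
    have h3 := Nat.choose_le_choose r (show r + 1 ≤ n - s - t by omega)
    rw [Nat.choose_self] at h2
    omega
  have hex : ∃ a b c, a + b + c = n ∧ a.choose r * b.choose s * c.choose t = maxOcc n p := by
    obtain ⟨w, hw, hw2⟩ := exists_max n p
    obtain ⟨i, j, hij, hle⟩ := occ_upper x r s t hs w
    refine ⟨i, _, j, hij.trans hw, le_antisymm (hmax _ _ _ (hij.trans hw)) ?_⟩
    rw [← hw2]
    exact hle
  have hz : B n p (maxOcc n p - 1) = 0 := by
    rw [B_eq_zero_iff]
    intro w hw he
    exact core x r s t n (maxOcc n p) hr hs ht hl hn hM h7 hmax hex w hw (by rw [← hp]; omega)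
  refine ⟨hz, 0, maxOcc n p - 1, maxOcc n p, by omega, by omega, ?_, hz, ?_⟩
  · rw [Ne, B_eq_zero_iff]
    push Not
    refine ⟨List.replicate n (!x), by simp, ?_⟩
    obtain ⟨i, j, hij, hle⟩ := occ_upper x r s t hs (List.replicate n (!x))
    simp only [List.count_replicate_self, List.length_replicate] at hij hle
    obtain rfl : i = 0 := by omega
    rw [Nat.choose_eq_zero_of_lt (show 0 < r by omega)] at hle
    simpa using hle
  · rw [Ne, B_eq_zero_iff]
    push Not
    exact exists_max n p

/-- Recursive version of `occ`, convenient for evaluation. -/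
def occR : List Bool → List Bool → ℕ
  | [], _ => 1
  | _ :: _, [] => 0
  | a :: p, b :: w => occR (a :: p) w + if b = a then occR p w else 0

lemma occ_eq_occR (p w : List Bool) : occ p w = occR p w := by
  induction w generalizing p with
  | nil => cases p with
    | nil => simp [occ_nil_left, occR]
    | cons a p => simp [occ_nil_right, occR]
  | cons b w ih => cases p with
    | nil => simp [occ_nil_left, occR]
    | cons a p => rw [occ_cons_cons, occR, ih, ih]

lemma no_zero_six (p : List Bool)
    (h1 : ∀ a b c d e f : Bool, occR p [a, b, c, d, e, f] ≤ 6)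
    (h2 : ∀ k : Fin 6, ∃ a b c d e f : Bool, occR p [a, b, c, d, e, f] = k) :
    ¬ HasInternalZeroAt p 6 := by
  rintro ⟨k1, k2, k3, h12, h23, -, hz, h3⟩
  rw [Ne, B_eq_zero_iff] at h3
  push Not at h3
  obtain ⟨w, hw, hk⟩ := h3
  have hk3 : k3 ≤ 6 := by
    match w, hw with
    | [a, b, c, d, e, f], _ => rw [← hk, occ_eq_occR]; exact h1 a b c d e f
  rw [B_eq_zero_iff] at hz
  obtain ⟨a, b, c, d, e, f, h⟩ := h2 ⟨k2, by omega⟩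
  exact hz [a, b, c, d, e, f] rfl (by rw [occ_eq_occR]; exact h)

lemma triv_cases (p : List Bool) (h : TrivEquiv p [true, true, false, true]) :
    p = [true, true, false, true] ∨ p = [true, false, true, true] ∨
      p = [false, false, true, false] ∨ p = [false, true, false, false] := by
  have hinv : ∀ q : List Bool, (q.map (!·)).map (!·) = q := fun q => by simp [Function.comp_def]
  rcases h with h | h | h | h
  · exact Or.inl h.symm
  · have := congrArg List.reverse h
    rw [List.reverse_reverse] at this
    exact Or.inr (Or.inl this.symm)
  · have := congrArg (List.map (!·)) h
    rw [hinv] at this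
    exact Or.inr (Or.inr (Or.inl this.symm))
  · have := congrArg (fun q => List.map (!·) (List.reverse q)) h
    simp only [List.reverse_reverse] at this
    rw [hinv] at this
    exact Or.inr (Or.inr (Or.inr this.symm))

theorem three_runs_internalZeros (p : List Bool) (l : ℕ) (hl : p.length = l)
    (hr : numRuns p = 3) (hl4 : 4 ≤ l) :
    (¬ TrivEquiv p [true, true, false, true] →
      ∀ n, l + 2 ≤ n → B n p (maxOcc n p - 1) = 0 ∧ HasInternalZeroAt p n) ∧
    (TrivEquiv p [true, true, false, true] →
      ¬ HasInternalZeroAt p 6 ∧ ∀ n, 7 ≤ n → B n p (maxOcc n p - 1) = 0) := by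
  obtain ⟨x, r, s, t, h1, h2, h3, hp⟩ := three_runs_form p hr
  have hlen : r + s + t = l := by
    rw [← hl, hp]; simp [threeWord]; omega
  constructor
  · intro hne n hn
    rw [hp]
    refine main_aux x r s t n h1 h2 h3 (by omega) (by omega) (Or.inr ?_)
    intro hcon
    apply hne
    rw [hp]
    rcases hcon with ⟨rfl, ⟨rfl, rfl⟩ | ⟨rfl, rfl⟩⟩ <;> cases x <;>
      simp [TrivEquiv, threeWord, List.replicate_succ]
  · intro heq
    have hc := triv_cases p heq
    refine ⟨?_, ?_⟩
    · rcases hc with h | h | h | h <;> rw [h] <;> apply no_zero_six <;> decide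
    · intro n hn
      have hl6 : l = 4 := by
        rw [← hl]
        rcases hc with h | h | h | h <;> rw [h] <;> rfl
      rw [hp]
      exact (main_aux x r s t n h1 h2 h3 (by omega) (by omega) (Or.inl hn)).1
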